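/- (Deficiency theorem, extension criterion.) Let H be a complex Hilbert space and let T be a densely defined, closed, symmetric linear operator on H, with deficiency subspaces N₊ = ker(T† − i·I) and N₋ = ker(T† + i·I). Then T admits a self-adjoint extension (a self-adjoint operator S with D(T) ⊆ D(S) and S agreeing with T on D(T)) if and only if there exists an isometric linear isomorphism from N₊ onto N₋ (equivalently, N₊ and N₋ have the same Hilbert dimension). In particular, if the dimensions of N₊ and N₋ differ, T has no self-adjoint extension. -/

import Mathlib

open MeasureTheory Complex Set LinearPMap
open scoped ComplexInnerProductSpace

/-!
Regard `T` as its graph, a linear relation `g ⊆ H × H`, and fix a nonreal `z` (here `z = i`).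
Symmetry of `g` says exactly that the Cayley transform `y - z̄ x ↦ y - z x`, for `(x, y) ∈ g`,
preserves norms. Self-adjoint relations correspond to unitaries `W` of `H` through
`{(x, y) | W (y - z̄ x) = y - z x}`, so a self-adjoint relation containing `g` exists iff the Cayley
transform of `g` extends to a unitary. This happens iff the orthogonal complements of its domain and
of its range are isometric, and these complements are the deficiency subspaces at `z` and `z̄`.
Finally, a self-adjoint relation containing the graph of a densely defined operator is itself the
graph of an operator.
-/

open scoped ComplexConjugate

section UnitaryExtension

variable {𝕜 E F : Type*} [RCLike 𝕜] [NormedAddCommGroup E] [InnerProductSpace 𝕜 E]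
  [NormedAddCommGroup F] [InnerProductSpace 𝕜 F]

theorem exists_linearIsometryEquiv_extending {K : Submodule 𝕜 E} {L : Submodule 𝕜 F}
    [K.HasOrthogonalProjection] [L.HasOrthogonalProjection]
    (V : K ≃ₗᵢ[𝕜] L) (U : Kᗮ ≃ₗᵢ[𝕜] Lᗮ) :
    ∃ W : E ≃ₗᵢ[𝕜] F, ∀ x : K, W x = V x := by
  refine ⟨K.orthogonalDecomposition.trans
    ((LinearIsometryEquiv.withLpProdCongr 2 V U).trans L.orthogonalDecomposition.symm),
    fun x ↦ ?_⟩
  simp [Submodule.orthogonalProjectionOnto_orthogonal_apply_eq_zero x.2]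

variable {M : Type*} [AddCommGroup M] [Module 𝕜 M] {A : M →ₗ[𝕜] E} {B : M →ₗ[𝕜] F}

/-- A linear map with codomain restricted to the closure of its range, where it has dense range. -/
def rangeClosureRestrict (A : M →ₗ[𝕜] E) : M →ₗ[𝕜] A.range.topologicalClosure :=
  A.codRestrict A.range.topologicalClosure fun m ↦
    A.range.le_topologicalClosure (A.mem_range_self m)

@[simp]
theorem coe_rangeClosureRestrict (m : M) : (rangeClosureRestrict A m : E) = A m := rfl

theorem denseRange_rangeClosureRestrict : DenseRange (rangeClosureRestrict A) := by
  rw [DenseRange, Subtype.dense_iff, ← range_comp]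
  exact subset_rfl

theorem exists_linearIsometryEquiv_map_eq_iff [CompleteSpace E] [CompleteSpace F]
    (hAB : ∀ m, ‖A m‖ = ‖B m‖) :
    (∃ W : E ≃ₗᵢ[𝕜] F, ∀ m, W (A m) = B m) ↔ Nonempty (A.rangeᗮ ≃ₗᵢ[𝕜] B.rangeᗮ) := by
  constructor
  · rintro ⟨W, hW⟩
    have hmap : A.range.map W.toLinearEquiv.toLinearMap = B.range := by
      rw [← LinearMap.range_comp]
      exact congrArg LinearMap.range (LinearMap.ext hW)
    rw [← hmap, ← Submodule.map_orthogonal_equiv]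
    exact ⟨W.submoduleMap _⟩
  · rw [← A.range.orthogonal_closure, ← B.range.orthogonal_closure]
    rintro ⟨U⟩
    let V := (LinearEquiv.refl 𝕜 M).extendOfIsometry (rangeClosureRestrict A)
      (rangeClosureRestrict B) denseRange_rangeClosureRestrict denseRange_rangeClosureRestrict
      fun m ↦ (hAB m).symm
    have hV (m : M) : V (rangeClosureRestrict A m) = rangeClosureRestrict B m :=
      LinearEquiv.extendOfIsometry_eq ..
    obtain ⟨W, hW⟩ := exists_linearIsometryEquiv_extending V U
    refine ⟨W, fun m ↦ ?_⟩
    rw [← coe_rangeClosureRestrict, hW, hV, coe_rangeClosureRestrict]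

end UnitaryExtension

section LinearRelation

variable {𝕜 H : Type*} [RCLike 𝕜] [NormedAddCommGroup H] [InnerProductSpace 𝕜 H]

/-- The map `(x, y) ↦ y - z x`. On the graph of an operator `T` it acts as `T - z`, which lets
`T - z` be studied for linear relations as well. -/
def shiftMap (H : Type*) [NormedAddCommGroup H] [InnerProductSpace 𝕜 H] (z : 𝕜) :
    H × H →ₗ[𝕜] H :=
  LinearMap.snd 𝕜 H H - z • LinearMap.fst 𝕜 H H

@[simp]
theorem shiftMap_apply (z : 𝕜) (p : H × H) : shiftMap H z p = p.2 - z • p.1 := rfl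

/-- The deficiency subspace `ker (g† - z)` of a linear relation `g`. For the graph of a densely
defined operator `T` it is `ker (T† - z)`. -/
noncomputable def deficiencySubspace (g : Submodule 𝕜 (H × H)) (z : 𝕜) : Submodule 𝕜 H :=
  g.adjoint.comap (LinearMap.id.prod (z • LinearMap.id))

theorem mem_deficiencySubspace {g : Submodule 𝕜 (H × H)} {z : 𝕜} {x : H} :
    x ∈ deficiencySubspace g z ↔ (x, z • x) ∈ g.adjoint :=
  Iff.rfl

/-- The linear relation with Cayley transform `W`: it consists of the pairs `(x, y)` with
`W (y - z̄ x) = y - z x`. For `z = i` this is the inverse of the classical transform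
`W = (T - i) (T + i)⁻¹`. -/
def inverseCayley (z : 𝕜) (W : H ≃ₗᵢ[𝕜] H) : Submodule 𝕜 (H × H) :=
  LinearMap.eqLocus (W.toLinearEquiv.toLinearMap ∘ₗ shiftMap H (conj z)) (shiftMap H z)

theorem mem_inverseCayley {z : 𝕜} {W : H ≃ₗᵢ[𝕜] H} {p : H × H} :
    p ∈ inverseCayley z W ↔ W (shiftMap H (conj z) p) = shiftMap H z p :=
  Iff.rfl

theorem orthogonal_range_shiftMap_domRestrict (g : Submodule 𝕜 (H × H)) (z : 𝕜) :
    (((shiftMap H z).domRestrict g).range)ᗮ = deficiencySubspace g (conj z) := by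
  have inner_shift (a b x : H) :
      inner 𝕜 (b - z • a) x = inner 𝕜 b x - inner 𝕜 a (conj z • x) := by
    rw [inner_sub_left, inner_smul_left, inner_smul_right]
  ext x
  rw [Submodule.mem_orthogonal, mem_deficiencySubspace, Submodule.mem_adjoint_iff]
  constructor
  · intro hx a b hab
    rw [← inner_shift]
    exact hx _ ⟨⟨(a, b), hab⟩, rfl⟩
  · rintro hx _ ⟨⟨⟨a, b⟩, hab⟩, rfl⟩
    exact (inner_shift a b x).trans (hx a b hab)

theorem inner_shiftMap_conj_sub_inner_shiftMap (z : 𝕜) (p q : H × H) :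
    inner 𝕜 (shiftMap H (conj z) p) (shiftMap H (conj z) q)
        - inner 𝕜 (shiftMap H z p) (shiftMap H z q) =
      (z - conj z) * (inner 𝕜 p.2 q.1 - inner 𝕜 p.1 q.2) := by
  simp only [shiftMap_apply, inner_sub_left, inner_sub_right, inner_smul_left, inner_smul_right,
    RCLike.conj_conj]
  ring

theorem norm_shiftMap_conj {g : Submodule 𝕜 (H × H)} (hg : g ≤ g.adjoint) (z : 𝕜) {p : H × H}
    (hp : p ∈ g) : ‖shiftMap H (conj z) p‖ = ‖shiftMap H z p‖ := by
  have hsymm : inner 𝕜 p.2 p.1 - inner 𝕜 p.1 p.2 = 0 :=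
    (g.mem_adjoint_iff p).1 (hg hp) p.1 p.2 hp
  have hinner := inner_shiftMap_conj_sub_inner_shiftMap z p p
  rw [hsymm, mul_zero, sub_eq_zero] at hinner
  rw [norm_eq_sqrt_re_inner (𝕜 := 𝕜), hinner, ← norm_eq_sqrt_re_inner]

theorem exists_le_inverseCayley_iff [CompleteSpace H] {g : Submodule 𝕜 (H × H)}
    (hg : g ≤ g.adjoint) (z : 𝕜) :
    (∃ W, g ≤ inverseCayley z W) ↔
      Nonempty (deficiencySubspace g z ≃ₗᵢ[𝕜] deficiencySubspace g (conj z)) := by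
  have extends_iff := exists_linearIsometryEquiv_map_eq_iff
    (A := (shiftMap H (conj z)).domRestrict g) (B := (shiftMap H z).domRestrict g)
    fun p ↦ norm_shiftMap_conj hg z p.2
  rw [orthogonal_range_shiftMap_domRestrict, orthogonal_range_shiftMap_domRestrict,
    RCLike.conj_conj] at extends_iff
  simpa [SetLike.le_def, mem_inverseCayley] using extends_iff

theorem exists_shiftMap_conj_eq_and_shiftMap_eq {z : 𝕜} (hz : conj z ≠ z) (u v : H) :
    ∃ p : H × H, shiftMap H (conj z) p = u ∧ shiftMap H z p = v := by
  have hz' : z - conj z ≠ 0 := sub_ne_zero.2 hz.symm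
  let x := (z - conj z)⁻¹ • (u - v)
  have hx : (z - conj z) • x = u - v := smul_inv_smul₀ hz' _
  refine ⟨(x, u + conj z • x), by simp, ?_⟩
  calc u + conj z • x - z • x = u - (z - conj z) • x := by module
    _ = v := by rw [hx, sub_sub_cancel]

theorem adjoint_inverseCayley {z : 𝕜} (hz : conj z ≠ z) (W : H ≃ₗᵢ[𝕜] H) :
    (inverseCayley z W).adjoint = inverseCayley z W := by
  have pairing_eq_zero_iff (p q : H × H) (hp : p ∈ inverseCayley z W) :
      inner 𝕜 p.2 q.1 - inner 𝕜 p.1 q.2 = 0 ↔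
        inner 𝕜 (shiftMap H z p) (W (shiftMap H (conj z) q)) =
          inner 𝕜 (shiftMap H z p) (shiftMap H z q) := by
    rw [← mul_eq_zero_iff_left (sub_ne_zero.2 hz.symm),
      ← inner_shiftMap_conj_sub_inner_shiftMap, sub_eq_zero, ← mem_inverseCayley.1 hp,
      W.inner_map_map]
  ext q
  rw [Submodule.mem_adjoint_iff, mem_inverseCayley]
  constructor
  · refine fun hq ↦ ext_inner_left 𝕜 fun v ↦ ?_
    obtain ⟨p, hpu, rfl⟩ := exists_shiftMap_conj_eq_and_shiftMap_eq hz (W.symm v) v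
    have hp : p ∈ inverseCayley z W := by rw [mem_inverseCayley, hpu, W.apply_symm_apply]
    exact (pairing_eq_zero_iff p q hp).1 (hq p.1 p.2 hp)
  · intro hq a b hab
    exact (pairing_eq_zero_iff (a, b) q hab).2 (by rw [hq])

theorem deficiencySubspace_eq_bot {g : Submodule 𝕜 (H × H)} (hg : g.adjoint ≤ g) {z : 𝕜}
    (hz : conj z ≠ z) : deficiencySubspace g z = ⊥ := by
  refine (Submodule.eq_bot_iff _).2 fun x hx ↦ ?_
  rw [mem_deficiencySubspace] at hx
  have h := (g.mem_adjoint_iff _).1 hx x (z • x) (hg hx)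
  rw [inner_smul_left, inner_smul_right, ← sub_mul] at h
  exact inner_self_eq_zero.1 ((mul_eq_zero.1 h).resolve_left (sub_ne_zero.2 hz))

theorem exists_selfAdjoint_relation_ge_iff [CompleteSpace H] {g : Submodule 𝕜 (H × H)}
    (hg : g ≤ g.adjoint) {z : 𝕜} (hz : conj z ≠ z) :
    (∃ s : Submodule 𝕜 (H × H), g ≤ s ∧ s.adjoint = s) ↔
      Nonempty (deficiencySubspace g z ≃ₗᵢ[𝕜] deficiencySubspace g (conj z)) := by
  rw [← exists_le_inverseCayley_iff hg z]
  constructor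
  · rintro ⟨s, hgs, hs⟩
    have hbot : deficiencySubspace s z = deficiencySubspace s (conj z) := by
      rw [deficiencySubspace_eq_bot hs.le hz,
        deficiencySubspace_eq_bot hs.le (by simpa using hz.symm)]
    obtain ⟨W, hW⟩ :=
      (exists_le_inverseCayley_iff hs.ge z).2 ⟨LinearIsometryEquiv.ofEq _ _ hbot⟩
    exact ⟨W, hgs.trans hW⟩
  · rintro ⟨W, hW⟩
    exact ⟨inverseCayley z W, hW, adjoint_inverseCayley hz W⟩

end LinearRelation

section LinearPMap

variable {𝕜 H : Type*} [RCLike 𝕜] [NormedAddCommGroup H] [InnerProductSpace 𝕜 H]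
  {T : H →ₗ.[𝕜] H}

theorem graph_toLinearPMap_of_graph_le {s : Submodule 𝕜 (H × H)}
    (hdense : Dense (T.domain : Set H)) (hTs : T.graph ≤ s) (hs : s ≤ s.adjoint) :
    s.toLinearPMap.graph = s := by
  refine s.toLinearPMap_graph_eq fun p hp hp₁ ↦ hdense.eq_zero_of_inner_right 𝕜 fun a ha ↦ ?_
  simpa [hp₁] using
    (s.mem_adjoint_iff p).1 (hs hp) a (T ⟨a, ha⟩) (hTs (T.mem_graph ⟨a, ha⟩))

variable [CompleteSpace H]

theorem mem_deficiencySubspace_graph_iff (hdense : Dense (T.domain : Set H)) {z : 𝕜} {x : H} :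
    x ∈ deficiencySubspace T.graph z ↔ ∃ hx : x ∈ T†.domain, T† ⟨x, hx⟩ = z • x := by
  rw [mem_deficiencySubspace, ← adjoint_graph_eq_graph_adjoint hdense]
  simp

theorem graph_le_graph_adjoint (hdense : Dense (T.domain : Set H)) (hT : T.IsFormalAdjoint T) :
    T.graph ≤ T.graph.adjoint := by
  rw [← adjoint_graph_eq_graph_adjoint hdense]
  exact le_graph_of_le (hT.le_adjoint hdense)

theorem exists_selfAdjoint_extension_iff_graph (hdense : Dense (T.domain : Set H)) :
    (∃ S, T ≤ S ∧ S† = S) ↔ ∃ s : Submodule 𝕜 (H × H), T.graph ≤ s ∧ s.adjoint = s := by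
  constructor
  · rintro ⟨S, hTS, hS⟩
    refine ⟨S.graph, le_graph_of_le hTS, ?_⟩
    rw [← adjoint_graph_eq_graph_adjoint (hdense.mono hTS.1), hS]
  · rintro ⟨s, hTs, hs⟩
    have hgraph : s.toLinearPMap.graph = s := graph_toLinearPMap_of_graph_le hdense hTs hs.ge
    have hle : T ≤ s.toLinearPMap := le_of_le_graph (hTs.trans_eq hgraph.symm)
    refine ⟨s.toLinearPMap, hle, eq_of_eq_graph ?_⟩
    rw [adjoint_graph_eq_graph_adjoint (hdense.mono hle.1), hgraph, hs]

end LinearPMap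

theorem selfadjoint_extension_iff_deficiency_isometric_general
    {H : Type*} [NormedAddCommGroup H] [InnerProductSpace ℂ H] [CompleteSpace H]
    (T : H →ₗ.[ℂ] H)
    (hdense : Dense (T.domain : Set H))
    (hsym : ∀ φ ψ : T.domain, ⟪(φ : H), T ψ⟫ = ⟪T φ, (ψ : H)⟫)
    {z : ℂ} (hz : z.im ≠ 0)
    (Nplus Nminus : Submodule ℂ H)
    (hNp : ∀ x : H, x ∈ Nplus ↔
      ∃ hx : x ∈ T.adjoint.domain, T.adjoint ⟨x, hx⟩ = z • x)
    (hNm : ∀ x : H, x ∈ Nminus ↔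
      ∃ hx : x ∈ T.adjoint.domain, T.adjoint ⟨x, hx⟩ = conj z • x) :
    (∃ S : H →ₗ.[ℂ] H, T ≤ S ∧ S.adjoint = S) ↔
      Nonempty (Nplus ≃ₗᵢ[ℂ] Nminus) := by
  obtain rfl : Nplus = deficiencySubspace T.graph z :=
    Submodule.ext fun x ↦ (hNp x).trans (mem_deficiencySubspace_graph_iff hdense).symm
  obtain rfl : Nminus = deficiencySubspace T.graph (conj z) :=
    Submodule.ext fun x ↦ (hNm x).trans (mem_deficiencySubspace_graph_iff hdense).symm
  have hgraph : T.graph ≤ T.graph.adjoint :=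
    graph_le_graph_adjoint hdense fun φ ψ ↦ (hsym φ ψ).symm
  rw [exists_selfAdjoint_extension_iff_graph hdense,
    exists_selfAdjoint_relation_ge_iff hgraph (mt conj_eq_iff_im.1 hz)]

/-- **Deficiency theorem (extension criterion).** A densely defined, closed, symmetric operator
`T` on a complex Hilbert space admits a self-adjoint extension if and only if its deficiency
subspaces `N₊ = ker(T† − i)` and `N₋ = ker(T† + i)` are isometrically isomorphic. -/
theorem selfadjoint_extension_iff_deficiency_isometric
    {H : Type*} [NormedAddCommGroup H] [InnerProductSpace ℂ H] [CompleteSpace H]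
    (T : H →ₗ.[ℂ] H)
    (hdense : Dense (T.domain : Set H))
    (hclosed : T.IsClosed)
    (hsym : ∀ φ ψ : T.domain, ⟪(φ : H), T ψ⟫ = ⟪T φ, (ψ : H)⟫)
    (Nplus Nminus : Submodule ℂ H)
    (hNp : ∀ x : H, x ∈ Nplus ↔
      ∃ hx : x ∈ T.adjoint.domain, T.adjoint ⟨x, hx⟩ = I • x)
    (hNm : ∀ x : H, x ∈ Nminus ↔
      ∃ hx : x ∈ T.adjoint.domain, T.adjoint ⟨x, hx⟩ = (-I) • x) :
    (∃ S : H →ₗ.[ℂ] H, T ≤ S ∧ S.adjoint = S) ↔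
      Nonempty (Nplus ≃ₗᵢ[ℂ] Nminus) :=
  selfadjoint_extension_iff_deficiency_isometric_general T hdense hsym (z := I) (by simp)
    Nplus Nminus hNp (by simpa only [conj_I] using hNm)
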